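/- Let k₁, k₂ > 0 with k₂−k₁+1/2 < 0, t ∈ ℝ, 0 < φ < π. Set ρ_n = i(k₂−k₁+1/2+n), and let n₀ be the largest nonnegative integer with k₂−k₁+1/2+n₀ < 0. Then for all m, n ∈ {0, …, n₀}: ∫_ℝ φ_{ρ_n}(x) φ_{ρ_m}*(x) w(x) dx = δ_{nm} · e^{2t(φ−π/2)} · (Γ(2k₂)Γ(2k₁−2k₂−1)/(Γ(k₁−k₂+it)Γ(k₁−k₂−it)Γ(2k₁−1))) · (n! (2k₂−2k₁+n+1)ₙ (2−2k₁)ₙ)/((2k₂)ₙ (2k₂−2k₁+2)_{2n}). -/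

import Mathlib

noncomputable section

open MeasureTheory Filter Topology Set Asymptotics ComplexConjugate
open Complex (I)

/-- Pochhammer symbol `(a)ₙ = a(a+1)⋯(a+n-1)`. -/
def poch (a : ℂ) (n : ℕ) : ℂ := ∏ k ∈ Finset.range n, (a + k)

/-- Generalized hypergeometric series `ₚF_q(a; b; z)` as a sum. -/
def pFq (a b : List ℂ) (z : ℂ) : ℂ :=
  ∑' n : ℕ, ((a.map fun c => poch c n).prod / (b.map fun c => poch c n).prod) * z ^ n /
    (n.factorial : ℂ)

def F32 (a b c d e z : ℂ) : ℂ := pFq [a, b, c] [d, e] z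

/-- The weight function `w(z)`. -/
def wfun (k₁ k₂ t φ : ℝ) (z : ℂ) : ℂ :=
  ((1 / (2 * Real.pi) : ℝ) : ℂ) *
    Complex.exp ((2 * z + (t : ℂ)) * (2 * (φ : ℂ) - (Real.pi : ℂ))) *
    Complex.Gamma ((k₁ : ℂ) + I * t + I * z) * Complex.Gamma ((k₁ : ℂ) - I * t - I * z) *
    Complex.Gamma ((k₂ : ℂ) + I * z) * Complex.Gamma ((k₂ : ℂ) - I * z)

/-- The `i`-periodic function `p(z) = (1/π) e^{πz} sin(π(k₁ − it − iz))`. -/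
def pper (k₁ t : ℝ) (z : ℂ) : ℂ :=
  (1 / (Real.pi : ℂ)) * Complex.exp ((Real.pi : ℂ) * z) *
    Complex.sin ((Real.pi : ℂ) * ((k₁ : ℂ) - I * t - I * z))

/-- The continuous Hahn function `φ_ρ`. -/
def phiC (k₁ k₂ t φ : ℝ) (ρ : ℂ) (z : ℂ) : ℂ :=
  Complex.exp (-2 * (φ : ℂ) * z) * pper k₁ t z *
    (Complex.Gamma (1 - (k₁ : ℂ) + I * t + I * z) / Complex.Gamma ((k₁ : ℂ) + I * z + I * t)) *
    F32 ((k₂ : ℂ) - I * z) ((k₂ : ℂ) - (k₁ : ℂ) + 1/2 + I * ρ)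
      ((k₂ : ℂ) - (k₁ : ℂ) + 1/2 - I * ρ) (2 * (k₂ : ℂ)) ((k₂ : ℂ) - (k₁ : ℂ) + I * t + 1) 1

/-- The discrete mass point `ρ_n = i(k₂ − k₁ + 1/2 + n)`. -/
def rhoD (k₁ k₂ : ℝ) (n : ℕ) : ℂ := I * ((k₂ : ℂ) - k₁ + 1/2 + n)

/-!
Multiplied by the Gamma factors of the weight, `φ_{ρ_n}` becomes a finite combination of the Beta
functions `B(k₂ - ix + j, v - j)` with `v = k₁ - k₂ - it` and `j ≤ n`. As a function of `x` each
of them is a Fourier transform: substituting `s = e^{-u}` in Euler's integral gives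
`B(a - ix, v) = ∫_{u > 0} e^{ixu} e^{-au} (1 - e^{-u})^{v - 1} du`. By Plancherel, the pairing of
the `j`-th with the `l`-th one is `2π B(2k₂ + j + l, 2k₁ - 2k₂ - 1 - j - l)`, that is, up to the
sign `(-1)^{j+l}` and a common constant, the moment `(K)_{j+l} / (N + 1)_{j+l}` of `s^{j+l}` for the
parameters `K = 2k₂` and `N = 2k₂ - 2k₁ + 1`. The coefficients of the combination are, up to the
same sign, those of the Jacobi polynomial `₂F₁(-n, N + n; K; s)`, so what is left is the
orthogonality of Jacobi polynomials for this moment functional. Here the Beta weight itself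
may diverge, and orthogonality comes from partial fractions instead: against `s^j` the sum has the
shape `∑ (-1)^l (m choose l) P(l) / (N + m + l)` with `P` of degree `m`, and therefore equals a
multiple of `P(-N - m)`, which vanishes for `j < m`.
-/

open scoped FourierTransform

section Plancherel

variable {V H : Type*} [NormedAddCommGroup V] [InnerProductSpace ℝ V] [FiniteDimensional ℝ V]
  [MeasurableSpace V] [BorelSpace V] [NormedAddCommGroup H] [InnerProductSpace ℂ H]
  [CompleteSpace H] {f g : V → H}

theorem coeFn_fourier_toLp (hf₁ : Integrable f) (hf₂ : MemLp f 2) :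
    ((𝓕 (hf₂.toLp f) : Lp H 2 (volume : Measure V)) : V → H) =ᵐ[volume] 𝓕 f := by
  have hcont : Continuous (𝓕 f) :=
    VectorFourier.fourierIntegral_continuous Real.continuous_fourierChar
      (L := innerₗ V) continuous_inner hf₁
  refine ae_eq_of_integral_contDiff_smul_eq ((Lp.memLp _).locallyIntegrable one_le_two)
    hcont.locallyIntegrable fun η hη hsupp ↦ ?_
  have hcomp : HasCompactSupport (Complex.ofRealCLM ∘ η) := hsupp.comp_left rfl
  set F : Lp H 2 (volume : Measure V) := 𝓕 (hf₂.toLp f)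
  let ψ : SchwartzMap V ℂ := hcomp.toSchwartzMap (by fun_prop)
  have hψ : ∀ x, ψ x = η x := fun _ ↦ rfl
  calc
    ∫ x, η x • F x = ∫ x, ψ x • F x := by
      simp only [hψ, Complex.coe_smul]
    _ = ∫ x, 𝓕 ψ x • hf₂.toLp f x := by
      simpa only [TemperedDistribution.fourier_apply, Lp.toTemperedDistribution_apply] using
        (DFunLike.congr_fun (Lp.fourier_toTemperedDistribution_eq (hf₂.toLp f)) ψ).symm
    _ = ∫ x, 𝓕 (ψ : V → ℂ) x • f x := by
      refine integral_congr_ae ?_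
      filter_upwards [hf₂.coeFn_toLp] with x hx
      rw [hx, SchwartzMap.fourier_coe]
    _ = ∫ x, ψ x • 𝓕 f x := by
      simpa using! VectorFourier.integral_fourierIntegral_smul_eq_flip (L := innerₗ V)
        Real.continuous_fourierChar continuous_inner ψ.integrable hf₁
    _ = ∫ x, η x • 𝓕 f x := by simp only [hψ, Complex.coe_smul]

theorem integrable_inner_fourier (hf₁ : Integrable f) (hf₂ : MemLp f 2) (hg₁ : Integrable g)
    (hg₂ : MemLp g 2) : Integrable fun ξ ↦ inner ℂ (𝓕 f ξ) (𝓕 g ξ) := by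
  refine (L2.integrable_inner (𝕜 := ℂ) (𝓕 (hf₂.toLp f)) (𝓕 (hg₂.toLp g))).congr ?_
  filter_upwards [coeFn_fourier_toLp hf₁ hf₂, coeFn_fourier_toLp hg₁ hg₂] with ξ hf hg
  rw [hf, hg]

theorem integral_inner_fourier_fourier (hf₁ : Integrable f) (hf₂ : MemLp f 2)
    (hg₁ : Integrable g) (hg₂ : MemLp g 2) :
    ∫ ξ, inner ℂ (𝓕 f ξ) (𝓕 g ξ) = ∫ x, inner ℂ (f x) (g x) := by
  calc
    ∫ ξ, inner ℂ (𝓕 f ξ) (𝓕 g ξ) = inner ℂ (𝓕 (hf₂.toLp f)) (𝓕 (hg₂.toLp g)) := by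
      rw [L2.inner_def]
      refine integral_congr_ae ?_
      filter_upwards [coeFn_fourier_toLp hf₁ hf₂, coeFn_fourier_toLp hg₁ hg₂] with ξ hf hg
      rw [hf, hg]
    _ = inner ℂ (hf₂.toLp f) (hg₂.toLp g) := Lp.inner_fourier_eq _ _
    _ = ∫ x, inner ℂ (f x) (g x) := by
      rw [L2.inner_def]
      refine integral_congr_ae ?_
      filter_upwards [hf₂.coeFn_toLp, hg₂.coeFn_toLp] with x hf hg
      rw [hf, hg]

end Plancherel

section BetaKernel

open Complex (betaIntegral)

variable {a b v w : ℂ}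

/-- The Beta integrand `s ^ (a - 1) * (1 - s) ^ (v - 1)` on `(0, 1)` in the variable
`s = exp (-u)`, Jacobian included, extended by zero to `u ≤ 0`. Its Fourier transform is a Beta
function. -/
def betaKernel (a v : ℂ) : ℝ → ℂ :=
  indicator (Ioi 0) fun u ↦ Complex.exp (-a * u) * (1 - Complex.exp (-u)) ^ (v - 1)

theorem image_exp_neg_Ioi_zero : (fun u : ℝ ↦ Real.exp (-u)) '' Ioi 0 = Ioo 0 1 := by
  ext s
  constructor
  · rintro ⟨u, hu, rfl⟩
    exact ⟨Real.exp_pos _, by simpa using hu⟩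
  · rintro ⟨hs₀, hs₁⟩
    exact ⟨-Real.log s, by simpa using Real.log_neg hs₀ hs₁, by simp [Real.exp_log hs₀]⟩

theorem hasDerivWithinAt_exp_neg (s : Set ℝ) (u : ℝ) :
    HasDerivWithinAt (fun u : ℝ ↦ Real.exp (-u)) (-Real.exp (-u)) s u := by
  simpa using ((hasDerivAt_neg u).exp).hasDerivWithinAt

theorem injOn_exp_neg (s : Set ℝ) : s.InjOn fun u : ℝ ↦ Real.exp (-u) :=
  (Real.exp_injective.comp neg_injective).injOn

theorem abs_deriv_smul_betaIntegrand (a v : ℂ) (u : ℝ) :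
    |(-Real.exp (-u))| • (((Real.exp (-u) : ℝ) : ℂ) ^ (a - 1) *
      (1 - ((Real.exp (-u) : ℝ) : ℂ)) ^ (v - 1)) =
    Complex.exp (-a * u) * (1 - Complex.exp (-u)) ^ (v - 1) := by
  have hpow : Complex.exp (-u) * Complex.exp (-u) ^ (a - 1) = Complex.exp (-a * u) := by
    rw [Complex.cpow_def_of_ne_zero (Complex.exp_ne_zero _), ← Complex.ofReal_neg,
      ← Complex.ofReal_exp, ← Complex.ofReal_log (Real.exp_pos _).le, Real.log_exp,
      Complex.ofReal_exp, ← Complex.exp_add]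
    push_cast
    ring_nf
  rw [abs_neg, abs_of_pos (Real.exp_pos _), Complex.real_smul, ← mul_assoc]
  push_cast
  rw [hpow]

theorem integrable_betaKernel (ha : 0 < a.re) (hv : 0 < v.re) : Integrable (betaKernel a v) := by
  have h := Complex.betaIntegral_convergent ha hv
  rw [intervalIntegrable_iff_integrableOn_Ioo_of_le zero_le_one, ← image_exp_neg_Ioi_zero,
    integrableOn_image_iff_integrableOn_abs_deriv_smul measurableSet_Ioi
      (fun u _ ↦ hasDerivWithinAt_exp_neg _ u) (injOn_exp_neg _)] at h
  simp only [abs_deriv_smul_betaIntegrand] at h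
  exact h.integrable_indicator measurableSet_Ioi

theorem integral_betaKernel (a v : ℂ) : ∫ u, betaKernel a v u = betaIntegral a v := by
  rw [betaIntegral, intervalIntegral.integral_of_le zero_le_one, integral_Ioc_eq_integral_Ioo,
    ← image_exp_neg_Ioi_zero, integral_image_eq_integral_abs_deriv_smul measurableSet_Ioi
      (fun u _ ↦ hasDerivWithinAt_exp_neg _ u) (injOn_exp_neg _)]
  simp only [abs_deriv_smul_betaIntegrand]
  exact integral_indicator measurableSet_Ioi

theorem betaKernel_mul_conj (a b v w : ℂ) (u : ℝ) :
    betaKernel a v u * conj (betaKernel b w u) =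
      betaKernel (a + conj b) (v + conj w - 1) u := by
  by_cases hu : u ∈ Ioi 0
  · set r : ℝ := 1 - Real.exp (-u) with hr
    have hr₀ : 0 < r := by simpa [hr] using hu
    have hbase : 1 - Complex.exp (-u) = r := by simp [hr]
    have hconj : conj ((r : ℂ) ^ (w - 1)) = (r : ℂ) ^ (conj w - 1) := by
      have harg : (r : ℂ).arg ≠ Real.pi := by
        simpa [Complex.arg_ofReal_of_nonneg hr₀.le] using Real.pi_ne_zero.symm
      simpa using (Complex.cpow_conj _ (w - 1) harg).symm
    simp only [betaKernel, indicator_of_mem hu, hbase, map_mul, hconj, ← Complex.exp_conj,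
      map_neg, Complex.conj_ofReal]
    rw [mul_mul_mul_comm, ← Complex.exp_add, ← Complex.cpow_add _ _ (by exact_mod_cast hr₀.ne')]
    ring_nf
  · simp [betaKernel, indicator_of_notMem hu]

theorem memLp_two_betaKernel (ha : 0 < a.re) (hv : 1 / 2 < v.re) :
    MemLp (betaKernel a v) 2 := by
  have hint := integrable_betaKernel ha (by linarith)
  rw [memLp_two_iff_integrable_sq_norm hint.aestronglyMeasurable]
  have hsq : Integrable (betaKernel (a + conj a) (v + conj v - 1)) :=
    integrable_betaKernel (by simpa using ha) (by simpa using by linarith)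
  refine hsq.norm.congr (Eventually.of_forall fun u ↦ ?_)
  simp only [← betaKernel_mul_conj, norm_mul, RCLike.norm_conj, sq]

theorem fourier_betaKernel (a v : ℂ) (ξ : ℝ) :
    𝓕 (betaKernel a v) ξ = betaIntegral (a + 2 * Real.pi * ξ * I) v := by
  rw [Real.fourier_real_eq_integral_exp_smul, ← integral_betaKernel]
  refine integral_congr_ae (Eventually.of_forall fun u ↦ ?_)
  by_cases hu : u ∈ Ioi 0
  · simp only [betaKernel, indicator_of_mem hu, smul_eq_mul, ← mul_assoc, ← Complex.exp_add]
    push_cast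
    ring_nf
  · simp [betaKernel, indicator_of_notMem hu]

theorem betaIntegral_eq_fourier_betaKernel (a v : ℂ) (x : ℝ) :
    betaIntegral (a - I * x) v = 𝓕 (betaKernel a v) (x / (-(2 * Real.pi))) := by
  rw [fourier_betaKernel]
  congr 1
  push_cast
  field_simp
  ring

theorem integrable_betaIntegral_mul_conj (ha : 0 < a.re) (hb : 0 < b.re) (hv : 1 / 2 < v.re)
    (hw : 1 / 2 < w.re) : Integrable fun x : ℝ ↦
      betaIntegral (a - I * x) v * conj (betaIntegral (b - I * x) w) := by
  have hpi : -(2 * Real.pi) ≠ 0 := neg_ne_zero.2 Real.two_pi_pos.ne'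
  have h := integrable_inner_fourier (integrable_betaKernel hb (by linarith))
    (memLp_two_betaKernel hb hw) (integrable_betaKernel ha (by linarith))
    (memLp_two_betaKernel ha hv)
  simpa only [betaIntegral_eq_fourier_betaKernel, RCLike.inner_apply] using h.comp_div hpi

theorem integral_betaIntegral_mul_conj (ha : 0 < a.re) (hb : 0 < b.re) (hv : 1 / 2 < v.re)
    (hw : 1 / 2 < w.re) :
    ∫ x : ℝ, betaIntegral (a - I * x) v * conj (betaIntegral (b - I * x) w) =
      2 * Real.pi * betaIntegral (a + conj b) (v + conj w - 1) := by
  have h := integral_inner_fourier_fourier (integrable_betaKernel hb (by linarith))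
    (memLp_two_betaKernel hb hw) (integrable_betaKernel ha (by linarith))
    (memLp_two_betaKernel ha hv)
  simp only [RCLike.inner_apply, betaKernel_mul_conj, integral_betaKernel] at h
  simp only [betaIntegral_eq_fourier_betaKernel]
  rw [Measure.integral_comp_div
    (fun ξ ↦ 𝓕 (betaKernel a v) ξ * conj (𝓕 (betaKernel b w) ξ)), h, abs_neg,
    abs_of_pos Real.two_pi_pos, Complex.real_smul]
  push_cast
  rfl

end BetaKernel

theorem neg_one_pow_mul_self {R : Type*} [Monoid R] [HasDistribNeg R] (n : ℕ) :
    (-1 : R) ^ n * (-1) ^ n = 1 := by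
  rw [← (Commute.refl _).mul_pow, neg_one_mul, neg_neg, one_pow]

section Pochhammer

variable {a : ℂ} {n : ℕ}

theorem poch_eq_eval_ascPochhammer (a : ℂ) (n : ℕ) : poch a n = (ascPochhammer ℂ n).eval a := by
  induction n with
  | zero => simp [poch]
  | succ n ih => rw [poch, Finset.prod_range_succ, ← poch, ih, ascPochhammer_succ_eval]

theorem poch_zero (a : ℂ) : poch a 0 = 1 := rfl

theorem poch_succ (a : ℂ) (n : ℕ) : poch a (n + 1) = poch a n * (a + n) :=
  Finset.prod_range_succ _ _

theorem poch_add (a : ℂ) (m n : ℕ) : poch a (m + n) = poch a m * poch (a + m) n := by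
  simp only [poch, Finset.prod_range_add, Nat.cast_add, add_assoc]

theorem poch_succ_left (a : ℂ) (n : ℕ) : poch a (n + 1) = a * poch (a + 1) n := by
  rw [add_comm, poch_add, poch_succ, poch_zero]
  simp

theorem poch_ne_zero (h : ∀ i < n, a + i ≠ 0) : poch a n ≠ 0 :=
  Finset.prod_ne_zero_iff.2 fun i hi ↦ h i (Finset.mem_range.1 hi)

theorem conj_poch (a : ℂ) (n : ℕ) : conj (poch a n) = poch (conj a) n := by
  simp [poch, map_prod]

theorem poch_sub_natCast (a : ℂ) (n : ℕ) : poch (a - n) n = (-1) ^ n * poch (1 - a) n := by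
  rw [poch_eq_eval_ascPochhammer, poch_eq_eval_ascPochhammer, ← neg_sub a 1,
    ascPochhammer_eval_neg_eq_descPochhammer, descPochhammer_eval_eq_ascPochhammer, ← mul_assoc,
    neg_one_pow_mul_self, one_mul]
  ring_nf

theorem poch_neg_natCast (m n : ℕ) :
    poch (-(m : ℂ)) n = (-1) ^ n * m.choose n * n.factorial := by
  rw [poch_eq_eval_ascPochhammer, ascPochhammer_eval_neg_eq_descPochhammer,
    descPochhammer_eval_eq_descFactorial, Nat.descFactorial_eq_factorial_mul_choose]
  push_cast
  ring

theorem add_natCast_ne_zero_of_re_pos (ha : 0 < a.re) (n : ℕ) : a + n ≠ 0 := fun h ↦ by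
  have hre : a.re + n = 0 := by simpa using congrArg Complex.re h
  linarith

theorem Gamma_add_natCast (ha : 0 < a.re) (n : ℕ) :
    Complex.Gamma (a + n) = poch a n * Complex.Gamma a := by
  rw [poch_eq_eval_ascPochhammer, ← Complex.Gamma_add_nat_div_Gamma_eq a fun k h ↦
    add_natCast_ne_zero_of_re_pos ha k (by rw [h, neg_add_cancel]),
    div_mul_cancel₀ _ (Complex.Gamma_ne_zero_of_re_pos ha)]

end Pochhammer

section PartialFractions

open Polynomial

variable {F : Type*} [Field F]

theorem prod_erase_range_natCast_sub (l k : ℕ) :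
    ∏ j ∈ (Finset.range (l + k + 1)).erase l, ((l : F) - j) =
      (-1) ^ k * (l.factorial * k.factorial) := by
  induction k with
  | zero =>
    rw [add_zero, Finset.range_add_one, Finset.erase_insert Finset.notMem_range_self,
      ← Finset.prod_range_reflect, ← Finset.prod_range_add_one_eq_factorial]
    push_cast
    simp only [pow_zero, Nat.factorial_zero, Nat.cast_one, one_mul, mul_one]
    refine Finset.prod_congr rfl fun j hj ↦ ?_
    have hsplit : l = l - 1 - j + (j + 1) := by have := Finset.mem_range.1 hj; lia
    rw [sub_eq_iff_eq_add']
    exact (congrArg (Nat.cast : ℕ → F) hsplit).trans (by push_cast; ring)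
  | succ k ih =>
    rw [Finset.range_add_one, Finset.erase_insert_of_ne (by lia),
      Finset.prod_insert (by simp), ← add_assoc, ih, Nat.factorial_succ]
    push_cast
    ring

variable [CharZero F]

theorem nodalWeight_range_natCast {m l : ℕ} (hl : l ≤ m) :
    Lagrange.nodalWeight (Finset.range (m + 1)) (fun i : ℕ ↦ (i : F)) l =
      (-1) ^ (m + l) * m.choose l / m.factorial := by
  obtain ⟨k, rfl⟩ := Nat.exists_eq_add_of_le hl
  have hsign : ((-1 : F) ^ k)⁻¹ = (-1) ^ (l + k + l) := by
    rw [← inv_pow, inv_neg_one, add_right_comm, pow_add, Even.neg_one_pow ⟨l, rfl⟩, one_mul]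
  have hchoose : ((l + k).choose l : F) ≠ 0 := mod_cast (Nat.choose_pos hl).ne'
  rw [Lagrange.nodalWeight, Finset.prod_inv_distrib, prod_erase_range_natCast_sub, mul_inv,
    hsign, ← Nat.choose_mul_factorial_mul_factorial hl, Nat.add_sub_cancel_left]
  push_cast
  field_simp

theorem sum_neg_one_pow_mul_choose_mul_eval_div (P : F[X]) {m : ℕ} (hP : P.natDegree ≤ m) {x : F}
    (hx : ∀ i ≤ m, x + i ≠ 0) :
    ∑ l ∈ Finset.range (m + 1), (-1) ^ l * m.choose l * (P.eval (l : F) / (x + l)) =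
      m.factorial * P.eval (-x) / ∏ i ∈ Finset.range (m + 1), (x + i) := by
  have hnode : ∀ i ∈ Finset.range (m + 1), -x ≠ (i : F) := fun i hi h ↦
    hx i (Finset.mem_range_succ_iff.1 hi) (by rw [← h, add_neg_cancel])
  have hdeg : P.degree < (Finset.range (m + 1)).card := by
    rw [Finset.card_range]
    exact degree_le_natDegree.trans_lt (mod_cast Nat.lt_succ_of_le hP)
  have hlagrange : P.eval (-x) = _ :=
    (congrArg (eval (-x)) (Lagrange.eq_interpolate Nat.cast_injective.injOn hdeg)).trans
      (Lagrange.eval_interpolate_not_at_node _ hnode)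
  have hnodal : (Lagrange.nodal (Finset.range (m + 1)) fun i : ℕ ↦ (i : F)).eval (-x) =
      (-1) ^ (m + 1) * ∏ i ∈ Finset.range (m + 1), (x + i) := by
    rw [Lagrange.eval_nodal, ← Finset.card_range (m + 1), ← Finset.prod_const,
      Finset.card_range, ← Finset.prod_mul_distrib]
    exact Finset.prod_congr rfl fun i _ ↦ by ring
  have hprod : ∏ i ∈ Finset.range (m + 1), (x + i) ≠ 0 :=
    Finset.prod_ne_zero_iff.2 fun i hi ↦ hx i (Finset.mem_range_succ_iff.1 hi)
  rw [eq_div_iff hprod, hlagrange, hnodal, Finset.sum_mul, Finset.mul_sum, Finset.mul_sum]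
  refine Finset.sum_congr rfl fun l hl ↦ ?_
  have hl : l ≤ m := Finset.mem_range_succ_iff.1 hl
  have hfact : (m.factorial : F) ≠ 0 := mod_cast m.factorial_ne_zero
  have hsign : (-1 : F) ^ (m + 1) * (-1) ^ (m + l) * -1 = (-1) ^ l := by
    linear_combination (-1) ^ l * neg_one_pow_mul_self (R := F) m
  rw [nodalWeight_range_natCast hl, ← neg_add', inv_neg, ← hsign]
  field_simp

end PartialFractions

section Jacobi

open Polynomial

variable {K N : ℂ}

/-- The coefficient of `s ^ l` in the Jacobi polynomial `₂F₁(-n, N + n; K; s)`. -/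
def jacobiCoeff (K N : ℂ) (n l : ℕ) : ℂ :=
  poch (-n) l * poch (N + n) l / (poch K l * l.factorial)

/-- The moment of `s ^ i` against the Beta weight `s ^ (K - 1) * (1 - s) ^ (N - K)` on `(0, 1)`,
normalised to total mass one and continued to parameters where that integral diverges. -/
def jacobiMoment (K N : ℂ) (i : ℕ) : ℂ :=
  poch K i / poch (N + 1) i

theorem conj_jacobiCoeff (K N : ℂ) (n l : ℕ) :
    conj (jacobiCoeff K N n l) = jacobiCoeff (conj K) (conj N) n l := by
  simp [jacobiCoeff, conj_poch]

/-- The polynomial `z ↦ (K + z)_j (N + 1 + j + z)_{m-j}`: up to `l`-independent factors, its value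
at `l` divided by `N + m + l` is `(N + m)_l / (K)_l` times the moment of `s ^ (j + l)`. -/
def jacobiNumerator (K N : ℂ) (m j : ℕ) : ℂ[X] :=
  taylor K (ascPochhammer ℂ j) * taylor (N + 1 + j) (ascPochhammer ℂ (m - j))

theorem eval_jacobiNumerator (K N z : ℂ) (m j : ℕ) :
    (jacobiNumerator K N m j).eval z = poch (K + z) j * poch (N + 1 + j + z) (m - j) := by
  simp only [jacobiNumerator, eval_mul, taylor_eval, poch_eq_eval_ascPochhammer, add_comm z]

theorem natDegree_jacobiNumerator_le (K N : ℂ) {m j : ℕ} (hj : j ≤ m) :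
    (jacobiNumerator K N m j).natDegree ≤ m := by
  refine natDegree_mul_le.trans ?_
  rw [natDegree_taylor, natDegree_taylor, ascPochhammer_natDegree, ascPochhammer_natDegree,
    Nat.add_sub_cancel' hj]

theorem jacobiCoeff_mul_jacobiMoment {m j l : ℕ} (hj : j ≤ m) (hl : l ≤ m)
    (hK : ∀ i : ℕ, K + i ≠ 0) (hN : ∀ i ≤ 2 * m, N + i ≠ 0) :
    jacobiCoeff K N m l * jacobiMoment K N (j + l) =
      (N + m) / poch (N + 1) m *
        ((-1) ^ l * m.choose l * ((jacobiNumerator K N m j).eval (l : ℂ) / (N + m + l))) := by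
  have hpoch : ∀ i ≤ 2 * m, poch (N + 1) i ≠ 0 := fun i hi ↦ poch_ne_zero fun r hr ↦ by
    simpa [add_assoc, add_comm (1 : ℂ)] using hN (r + 1) (by lia)
  have hNml : N + m + l ≠ 0 := by simpa [add_assoc] using hN (m + l) (by lia)
  have hKl : poch K l ≠ 0 := poch_ne_zero fun i _ ↦ hK i
  have hfact : (l.factorial : ℂ) ≠ 0 := mod_cast l.factorial_ne_zero
  have hshift : poch (N + m) l * (N + m + l) = (N + m) * poch (N + m + 1) l := by
    rw [← poch_succ, poch_succ_left]
  have hsplit : poch (N + 1) (j + l) * poch (N + 1 + j + l) (m - j) =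
      poch (N + 1) m * poch (N + m + 1) l := by
    rw [show N + 1 + j + l = N + 1 + (j + l : ℕ) by push_cast; ring, ← poch_add,
      show N + m + 1 = N + 1 + m by ring, ← poch_add]
    congr 1
    lia
  rw [jacobiCoeff, jacobiMoment, eval_jacobiNumerator, poch_neg_natCast, add_comm j l,
    poch_add K, add_comm l j]
  have := hpoch (j + l) (by lia)
  have := hpoch m (by lia)
  field_simp
  linear_combination m.choose l * poch (K + l) j * (poch (N + 1) m * hshift - (N + m) * hsplit)

theorem sum_jacobiCoeff_mul_jacobiMoment {m j : ℕ} (hj : j ≤ m) (hK : ∀ i : ℕ, K + i ≠ 0)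
    (hN : ∀ i ≤ 2 * m, N + i ≠ 0) :
    ∑ l ∈ Finset.range (m + 1), jacobiCoeff K N m l * jacobiMoment K N (j + l) =
      if j = m then m.factorial * poch (K - N - m) m / poch (N + 1) (2 * m) else 0 := by
  have hx : ∀ i ≤ m, N + m + (i : ℂ) ≠ 0 := fun i hi ↦ by
    simpa [add_assoc] using hN (m + i) (by lia)
  rw [Finset.sum_congr rfl fun l hl ↦
      jacobiCoeff_mul_jacobiMoment hj (Finset.mem_range_succ_iff.1 hl) hK hN, ← Finset.mul_sum,
    sum_neg_one_pow_mul_choose_mul_eval_div _ (natDegree_jacobiNumerator_le K N hj) hx,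
    eval_jacobiNumerator, ← poch]
  split_ifs with h
  · subst h
    have hNm : N + j ≠ 0 := hN j (by lia)
    rw [poch_succ_left, two_mul, poch_add, show N + 1 + j = N + j + 1 by ring,
      show K + -(N + j) = K - N - j by ring, Nat.sub_self, poch_zero]
    field_simp
  · have hzero : poch (N + 1 + j + -(N + m)) (m - j) = 0 := by
      refine Finset.prod_eq_zero (Finset.mem_range.2 (by lia : m - j - 1 < m - j)) ?_
      rw [Nat.sub_sub, Nat.cast_sub (by lia)]
      push_cast
      ring
    rw [hzero]
    simp

theorem sum_sum_jacobiCoeff_mul_jacobiMoment_of_le {n m : ℕ} (hnm : n ≤ m)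
    (hK : ∀ i : ℕ, K + i ≠ 0) (hN : ∀ i ≤ 2 * m, N + i ≠ 0) :
    ∑ j ∈ Finset.range (n + 1), ∑ l ∈ Finset.range (m + 1),
        jacobiCoeff K N n j * jacobiCoeff K N m l * jacobiMoment K N (j + l) =
      (if n = m then 1 else 0) * (n.factorial * poch (N + n) n * poch (1 - K + N) n /
        (poch K n * poch (N + 1) (2 * n))) := by
  have hinner : ∀ j ∈ Finset.range (n + 1), ∑ l ∈ Finset.range (m + 1),
      jacobiCoeff K N n j * jacobiCoeff K N m l * jacobiMoment K N (j + l) =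
        if j = m then jacobiCoeff K N n j *
          (m.factorial * poch (K - N - m) m / poch (N + 1) (2 * m)) else 0 := fun j hj ↦ by
    have hjm : j ≤ m := (Finset.mem_range_succ_iff.1 hj).trans hnm
    simp only [mul_assoc, ← Finset.mul_sum, sum_jacobiCoeff_mul_jacobiMoment hjm hK hN,
      mul_ite, mul_zero]
  rw [Finset.sum_congr rfl hinner, Finset.sum_ite_eq']
  rcases hnm.eq_or_lt with rfl | hlt
  · have hKn : poch K n ≠ 0 := poch_ne_zero fun i _ ↦ hK i
    have hfact : (n.factorial : ℂ) ≠ 0 := mod_cast n.factorial_ne_zero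
    rw [if_pos (Finset.self_mem_range_succ n), if_pos rfl, jacobiCoeff, poch_neg_natCast,
      poch_sub_natCast, Nat.choose_self, show 1 - (K - N) = 1 - K + N by ring]
    field_simp
    linear_combination poch (N + n) n * poch (1 - K + N) n / poch (N + 1) (2 * n) *
      neg_one_pow_mul_self (R := ℂ) n
  · rw [if_neg (by simpa using hlt), if_neg hlt.ne, zero_mul]

theorem sum_sum_jacobiCoeff_mul_jacobiMoment {n m : ℕ} (hK : ∀ i : ℕ, K + i ≠ 0)
    (hN : ∀ i ≤ 2 * max n m, N + i ≠ 0) :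
    ∑ j ∈ Finset.range (n + 1), ∑ l ∈ Finset.range (m + 1),
        jacobiCoeff K N n j * jacobiCoeff K N m l * jacobiMoment K N (j + l) =
      (if n = m then 1 else 0) * (n.factorial * poch (N + n) n * poch (1 - K + N) n /
        (poch K n * poch (N + 1) (2 * n))) := by
  rcases le_total n m with hnm | hmn
  · exact sum_sum_jacobiCoeff_mul_jacobiMoment_of_le hnm hK (by rwa [max_eq_right hnm] at hN)
  · have hsymm := sum_sum_jacobiCoeff_mul_jacobiMoment_of_le hmn hK
      (by rwa [max_eq_left hmn] at hN)
    calc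
      _ = ∑ l ∈ Finset.range (m + 1), ∑ j ∈ Finset.range (n + 1),
          jacobiCoeff K N m l * jacobiCoeff K N n j * jacobiMoment K N (l + j) := by
        rw [Finset.sum_comm]
        refine Finset.sum_congr rfl fun l _ ↦ Finset.sum_congr rfl fun j _ ↦ ?_
        rw [mul_comm (jacobiCoeff K N n j), add_comm]
      _ = _ := hsymm
      _ = _ := by
        rcases eq_or_ne n m with rfl | hne
        · rfl
        · simp only [hne, hne.symm, if_false, zero_mul]

end Jacobi

section BetaSum

open Complex (betaIntegral)

variable {a b v w : ℂ} {n m : ℕ}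

theorem betaIntegral_add_natCast_sub_natCast {l : ℕ} (ha : 0 < a.re) (hv : l < v.re) :
    betaIntegral (a + l) (v - l) = (-1) ^ l * poch a l / poch (1 - v) l * betaIntegral a v := by
  have hl : (0 : ℝ) ≤ l := l.cast_nonneg
  have hvl : 0 < (v - l).re := by simpa using hv
  have hal : 0 < (a + l).re := by simpa using by linarith
  have hΓv : Complex.Gamma v = (-1) ^ l * poch (1 - v) l * Complex.Gamma (v - l) := by
    rw [← poch_sub_natCast, ← Gamma_add_natCast hvl, sub_add_cancel]
  have hpoch : poch (1 - v) l ≠ 0 := fun h ↦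
    Complex.Gamma_ne_zero_of_re_pos (hl.trans_lt hv) (by rw [hΓv, h, mul_zero, zero_mul])
  rw [Complex.betaIntegral_eq_Gamma_mul_div _ _ hal hvl,
    Complex.betaIntegral_eq_Gamma_mul_div _ _ ha (hl.trans_lt hv), Gamma_add_natCast ha, hΓv,
    add_add_sub_cancel]
  field_simp
  linear_combination -(poch a l * Complex.Gamma a * Complex.Gamma (v - l) /
    Complex.Gamma (a + v)) * neg_one_pow_mul_self (R := ℂ) l

/-- The combination of shifted Beta functions into which a Hahn function expands at a discrete
mass point; `c` will be a sequence of Jacobi coefficients. -/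
def betaSum (c : ℕ → ℂ) (n : ℕ) (a v : ℂ) : ℂ :=
  ∑ j ∈ Finset.range (n + 1), (-1) ^ j * c j * betaIntegral (a + j) (v - j)

theorem F32_neg_natCast_one (a c d e : ℂ) (n : ℕ) :
    F32 a (-n) c d e 1 = ∑ j ∈ Finset.range (n + 1),
      poch a j * poch (-n) j * poch c j / (poch d j * poch e j) / j.factorial := by
  rw [F32, pFq, tsum_eq_sum (s := Finset.range (n + 1)) fun j hj ↦ ?_]
  · simp [mul_assoc]
  · have hnj : n < j := by simpa [Nat.lt_succ_iff] using hj
    simp [poch_neg_natCast, Nat.choose_eq_zero_of_lt hnj]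

theorem F32_neg_natCast_mul_betaIntegral (K N : ℂ) (ha : 0 < a.re) (hv : n < v.re) :
    F32 a (-n) (N + n) K (1 - v) 1 * betaIntegral a v = betaSum (jacobiCoeff K N n) n a v := by
  rw [F32_neg_natCast_one, betaSum, Finset.sum_mul]
  refine Finset.sum_congr rfl fun j hj ↦ ?_
  have hjn : (j : ℝ) ≤ n := mod_cast Finset.mem_range_succ_iff.1 hj
  rw [betaIntegral_add_natCast_sub_natCast ha (hjn.trans_lt hv), jacobiCoeff]
  linear_combination -(poch a j * poch (-n) j * poch (N + n) j / (poch K j * poch (1 - v) j) /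
    j.factorial * betaIntegral a v) * neg_one_pow_mul_self (R := ℂ) j

theorem integrable_betaIntegral_shift_mul_conj {j l : ℕ} (ha : 0 < a.re) (hb : 0 < b.re)
    (hj : j + 1 / 2 < v.re) (hl : l + 1 / 2 < w.re) : Integrable fun x : ℝ ↦
      betaIntegral (a - I * x + j) (v - j) * conj (betaIntegral (b - I * x + l) (w - l)) := by
  simp only [sub_add_eq_add_sub]
  exact integrable_betaIntegral_mul_conj (by simpa using by linarith) (by simpa using by linarith)
    (by simpa using by linarith) (by simpa using by linarith)

theorem integral_betaIntegral_shift_mul_conj {j l : ℕ} (ha : 0 < a.re) (hb : 0 < b.re)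
    (hj : j + 1 / 2 < v.re) (hl : l + 1 / 2 < w.re) :
    ∫ x : ℝ, betaIntegral (a - I * x + j) (v - j) * conj (betaIntegral (b - I * x + l) (w - l)) =
      2 * Real.pi * betaIntegral (a + conj b) (v + conj w - 1) *
        ((-1) ^ (j + l) * jacobiMoment (a + conj b) (1 - v - conj w) (j + l)) := by
  simp only [sub_add_eq_add_sub]
  rw [integral_betaIntegral_mul_conj (by simpa using by linarith) (by simpa using by linarith)
      (by simpa using by linarith) (by simpa using by linarith),
    show a + j + conj (b + l) = a + conj b + (j + l : ℕ) by
      simp only [map_add, map_natCast, Nat.cast_add]; ring,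
    show v - j + conj (w - l) - 1 = v + conj w - 1 - (j + l : ℕ) by
      simp only [map_sub, map_natCast, Nat.cast_add]; ring,
    betaIntegral_add_natCast_sub_natCast (by simpa using by linarith) (by simpa using by linarith),
    jacobiMoment, show 1 - (v + conj w - 1) = 1 - v - conj w + 1 by ring]
  ring

theorem integral_betaSum_mul_conj (c d : ℕ → ℂ) (ha : 0 < a.re) (hb : 0 < b.re)
    (hv : n + 1 / 2 < v.re) (hw : m + 1 / 2 < w.re) :
    ∫ x : ℝ, betaSum c n (a - I * x) v * conj (betaSum d m (b - I * x) w) =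
      2 * Real.pi * betaIntegral (a + conj b) (v + conj w - 1) *
        ∑ j ∈ Finset.range (n + 1), ∑ l ∈ Finset.range (m + 1),
          c j * conj (d l) * jacobiMoment (a + conj b) (1 - v - conj w) (j + l) := by
  have hv' : ∀ j ∈ Finset.range (n + 1), j + 1 / 2 < v.re := fun j hj ↦
    hv.trans_le' (by gcongr; exact Finset.mem_range_succ_iff.1 hj)
  have hw' : ∀ l ∈ Finset.range (m + 1), l + 1 / 2 < w.re := fun l hl ↦
    hw.trans_le' (by gcongr; exact Finset.mem_range_succ_iff.1 hl)
  have hint : ∀ j ∈ Finset.range (n + 1), ∀ l ∈ Finset.range (m + 1), Integrable fun x : ℝ ↦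
      ((-1) ^ (j + l) * (c j * conj (d l))) * (betaIntegral (a - I * x + j) (v - j) *
        conj (betaIntegral (b - I * x + l) (w - l))) := fun j hj l hl ↦
    (integrable_betaIntegral_shift_mul_conj ha hb (hv' j hj) (hw' l hl)).const_mul _
  have hexpand : ∀ x : ℝ, betaSum c n (a - I * x) v * conj (betaSum d m (b - I * x) w) =
      ∑ j ∈ Finset.range (n + 1), ∑ l ∈ Finset.range (m + 1),
        ((-1) ^ (j + l) * (c j * conj (d l))) * (betaIntegral (a - I * x + j) (v - j) *
          conj (betaIntegral (b - I * x + l) (w - l))) := fun x ↦ by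
    rw [betaSum, betaSum, map_sum, Finset.sum_mul_sum]
    refine Finset.sum_congr rfl fun j _ ↦ Finset.sum_congr rfl fun l _ ↦ ?_
    simp only [map_mul, map_pow, map_neg, map_one]
    ring
  simp only [hexpand]
  rw [integral_finsetSum _ fun j hj ↦ integrable_finsetSum _ (hint j hj),
    Finset.mul_sum]
  refine Finset.sum_congr rfl fun j hj ↦ ?_
  rw [integral_finsetSum _ (hint j hj), Finset.mul_sum]
  refine Finset.sum_congr rfl fun l hl ↦ ?_
  rw [integral_const_mul, integral_betaIntegral_shift_mul_conj ha hb (hv' j hj) (hw' l hl)]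
  linear_combination (2 * Real.pi * betaIntegral (a + conj b) (v + conj w - 1) *
    (c j * conj (d l) * jacobiMoment (a + conj b) (1 - v - conj w) (j + l))) *
      neg_one_pow_mul_self (R := ℂ) (j + l)

end BetaSum

section ContinuousHahn

open Complex (betaIntegral)

variable {k₁ k₂ t : ℝ}

/-- The `₃F₂` factor of the continuous Hahn function `φ_ρ`. -/
def hahnF32 (k₁ k₂ t : ℝ) (ρ z : ℂ) : ℂ :=
  F32 (k₂ - I * z) (k₂ - k₁ + 1 / 2 + I * ρ) (k₂ - k₁ + 1 / 2 - I * ρ) (2 * k₂)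
    (k₂ - k₁ + I * t + 1) 1

theorem phiC_eq_exp_div_Gamma_mul_hahnF32 (k₂ φ : ℝ) (ρ : ℂ) {z : ℂ}
    (hz : Complex.sin (Real.pi * (k₁ - I * t - I * z)) ≠ 0) :
    phiC k₁ k₂ t φ ρ z = Complex.exp ((Real.pi - 2 * φ) * z) /
      (Complex.Gamma (k₁ + I * t + I * z) * Complex.Gamma (k₁ - I * t - I * z)) *
      hahnF32 k₁ k₂ t ρ z := by
  set y : ℂ := k₁ - I * t - I * z with hy
  have hpi : (Real.pi : ℂ) ≠ 0 := mod_cast Real.pi_ne_zero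
  have hrefl := Complex.Gamma_mul_Gamma_one_sub y
  have hΓ : Complex.Gamma y ≠ 0 := fun h ↦ div_ne_zero hpi hz (by rw [← hrefl, h, zero_mul])
  have hexp : Complex.exp ((Real.pi - 2 * φ) * z) =
      Complex.exp (-2 * φ * z) * Complex.exp (Real.pi * z) := by
    rw [← Complex.exp_add]
    ring_nf
  rw [eq_div_iff hz] at hrefl
  rw [phiC, ← hahnF32, pper, ← hy, hexp, show 1 - k₁ + I * t + I * z = 1 - y by rw [hy]; ring,
    show (k₁ : ℂ) + I * z + I * t = k₁ + I * t + I * z by ring]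
  have hsin : 1 / (Real.pi : ℂ) * Complex.sin (Real.pi * y) * Complex.Gamma (1 - y) =
      1 / Complex.Gamma y := by
    field_simp
    linear_combination hrefl
  linear_combination Complex.exp (-2 * φ * z) * Complex.exp (Real.pi * z) *
    hahnF32 k₁ k₂ t ρ z / Complex.Gamma (k₁ + I * t + I * z) * hsin

theorem sin_pi_mul_ne_zero_of_im_ne_zero {z : ℂ} (hz : z.im ≠ 0) :
    Complex.sin (Real.pi * z) ≠ 0 := by
  rw [Complex.sin_ne_zero_iff]
  intro k hk
  rw [mul_comm] at hk
  have hzk : z = k := mul_right_cancel₀ (mod_cast Real.pi_ne_zero) hk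
  exact hz (by rw [hzk, Complex.intCast_im])

theorem phiC_mul_conj_mul_wfun (hk₂ : 0 < k₂) (hk : k₂ < k₁) (φ : ℝ) (ρ σ : ℂ) {x : ℝ}
    (hx : t + x ≠ 0) :
    phiC k₁ k₂ t φ ρ x * conj (phiC k₁ k₂ t φ σ x) * wfun k₁ k₂ t φ x =
      Complex.exp ((2 * t * (φ - Real.pi / 2) : ℝ)) /
        (2 * Real.pi * (Complex.Gamma (k₁ - k₂ + I * t) * Complex.Gamma (k₁ - k₂ - I * t))) *
      ((hahnF32 k₁ k₂ t ρ x * betaIntegral (k₂ - I * x) (k₁ - k₂ - I * t)) *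
        conj (hahnF32 k₁ k₂ t σ x * betaIntegral (k₂ - I * x) (k₁ - k₂ - I * t))) := by
  have him : (k₁ - I * t - I * x : ℂ).im = -(t + x) := by simp [sub_eq_neg_add]
  have hsin := sin_pi_mul_ne_zero_of_im_ne_zero (by rw [him]; exact neg_ne_zero.2 hx)
  have hexp : Complex.exp ((Real.pi - 2 * φ) * x) * Complex.exp ((Real.pi - 2 * φ) * x) *
      Complex.exp ((2 * x + t) * (2 * φ - Real.pi)) =
        Complex.exp ((2 * t * (φ - Real.pi / 2) : ℝ)) := by
    rw [← Complex.exp_add, ← Complex.exp_add]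
    push_cast
    ring_nf
  have hΓ : ∀ {z : ℂ}, 0 < z.re → Complex.Gamma z ≠ 0 := Complex.Gamma_ne_zero_of_re_pos
  have hΓv : Complex.Gamma (k₁ - k₂ - I * t) ≠ 0 := hΓ (by simpa using hk)
  have hΓv' : Complex.Gamma (k₁ - k₂ + I * t) ≠ 0 := hΓ (by simpa using hk)
  rw [phiC_eq_exp_div_Gamma_mul_hahnF32 k₂ φ ρ hsin, phiC_eq_exp_div_Gamma_mul_hahnF32 k₂ φ σ hsin,
    wfun, Complex.betaIntegral_eq_Gamma_mul_div _ _ (by simpa using hk₂) (by simpa using hk),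
    show (k₂ : ℂ) - I * x + (k₁ - k₂ - I * t) = k₁ - I * t - I * x by ring, ← hexp]
  simp only [map_mul, map_div₀, ← Complex.Gamma_conj, ← Complex.exp_conj, map_add, map_sub,
    Complex.conj_ofReal, Complex.conj_I, map_ofNat, neg_mul, sub_neg_eq_add]
  simp only [← sub_eq_add_neg]
  push_cast
  field_simp

theorem I_mul_rhoD (k₁ k₂ : ℝ) (n : ℕ) : I * rhoD k₁ k₂ n = -(k₂ - k₁ + 1 / 2 + n) := by
  rw [rhoD, ← mul_assoc, Complex.I_mul_I, neg_one_mul]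

theorem hahnF32_rhoD_mul_betaIntegral (t : ℝ) (hk₂ : 0 < k₂) {n : ℕ} (hn : k₂ + n < k₁) (x : ℝ) :
    hahnF32 k₁ k₂ t (rhoD k₁ k₂ n) x * betaIntegral (k₂ - I * x) (k₁ - k₂ - I * t) =
      betaSum (jacobiCoeff (2 * k₂) (2 * k₂ - 2 * k₁ + 1) n) n (k₂ - I * x)
        (k₁ - k₂ - I * t) := by
  rw [← F32_neg_natCast_mul_betaIntegral _ _ (by simpa using hk₂) (by simpa using by linarith),
    hahnF32, I_mul_rhoD]
  ring_nf

theorem integral_phiC_rhoD_mul_conj (t φ : ℝ) (hk₂ : 0 < k₂) {n m : ℕ}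
    (hn : k₂ - k₁ + 1 / 2 + n < 0) (hm : k₂ - k₁ + 1 / 2 + m < 0) :
    ∫ x : ℝ, phiC k₁ k₂ t φ (rhoD k₁ k₂ n) x * conj (phiC k₁ k₂ t φ (rhoD k₁ k₂ m) x) *
        wfun k₁ k₂ t φ x =
      Complex.exp ((2 * t * (φ - Real.pi / 2) : ℝ)) /
        (Complex.Gamma (k₁ - k₂ + I * t) * Complex.Gamma (k₁ - k₂ - I * t)) *
      (betaIntegral (2 * k₂) (2 * k₁ - 2 * k₂ - 1) *
        ∑ j ∈ Finset.range (n + 1), ∑ l ∈ Finset.range (m + 1),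
          jacobiCoeff (2 * k₂) (2 * k₂ - 2 * k₁ + 1) n j *
          jacobiCoeff (2 * k₂) (2 * k₂ - 2 * k₁ + 1) m l *
          jacobiMoment (2 * k₂) (2 * k₂ - 2 * k₁ + 1) (j + l)) := by
  have hae : ∀ᵐ x : ℝ, t + x ≠ 0 := by
    filter_upwards [Measure.ae_ne volume (-t)] with x hx
    rwa [Ne, add_comm, add_eq_zero_iff_eq_neg]
  rw [integral_congr_ae (hae.mono fun x hx ↦ phiC_mul_conj_mul_wfun hk₂ (by linarith) φ _ _ hx),
    integral_const_mul]
  simp only [hahnF32_rhoD_mul_betaIntegral t hk₂ (show k₂ + n < k₁ by linarith),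
    hahnF32_rhoD_mul_betaIntegral t hk₂ (show k₂ + m < k₁ by linarith)]
  rw [integral_betaSum_mul_conj _ _ (by simpa using hk₂) (by simpa using hk₂)
    (by simpa using by linarith) (by simpa using by linarith)]
  have hsum : (k₁ : ℂ) - k₂ - I * t + conj ((k₁ : ℂ) - k₂ - I * t) = 2 * k₁ - 2 * k₂ := by
    simp only [map_sub, map_mul, Complex.conj_ofReal, Complex.conj_I]
    ring
  rw [hsum, sub_sub 1, hsum, show 1 - (2 * (k₁ : ℂ) - 2 * k₂) = 2 * k₂ - 2 * k₁ + 1 by ring]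
  simp only [conj_jacobiCoeff, map_sub, map_add, map_mul, map_one, map_ofNat,
    Complex.conj_ofReal, ← two_mul]
  field_simp

end ContinuousHahn

theorem discrete_orthogonality_general (k₁ k₂ : ℝ) (hk₂ : 0 < k₂) (t φ : ℝ) (n m : ℕ)
    (hn : k₂ - k₁ + 1 / 2 + n < 0) (hm : k₂ - k₁ + 1 / 2 + m < 0) :
    (∫ x : ℝ, phiC k₁ k₂ t φ (rhoD k₁ k₂ n) (x : ℂ) *
        conj (phiC k₁ k₂ t φ (rhoD k₁ k₂ m) (x : ℂ)) * wfun k₁ k₂ t φ (x : ℂ)) =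
      (if n = m then 1 else 0) *
        (Complex.exp (((2 * t * (φ - Real.pi / 2) : ℝ) : ℂ)) *
          (Complex.Gamma (2 * (k₂ : ℂ)) * Complex.Gamma (2 * (k₁ : ℂ) - 2 * k₂ - 1) /
            (Complex.Gamma ((k₁ : ℂ) - k₂ + I * t) * Complex.Gamma ((k₁ : ℂ) - k₂ - I * t) *
              Complex.Gamma (2 * (k₁ : ℂ) - 1))) *
          ((n.factorial : ℂ) * poch (2 * (k₂ : ℂ) - 2 * k₁ + n + 1) n *
              poch (2 - 2 * (k₁ : ℂ)) n) /
            (poch (2 * (k₂ : ℂ)) n * poch (2 * (k₂ : ℂ) - 2 * k₁ + 2) (2 * n))) := by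
  have hK : 0 < (2 * (k₂ : ℂ)).re := by simpa using hk₂
  have hB : 0 < (2 * (k₁ : ℂ) - 2 * k₂ - 1).re := by simpa using by linarith
  have hN : ∀ i ≤ 2 * max n m, 2 * (k₂ : ℂ) - 2 * k₁ + 1 + i ≠ 0 := fun i hi h ↦ by
    have hre : 2 * k₂ - 2 * k₁ + 1 + i = 0 := by exact_mod_cast h
    have hmax : k₂ - k₁ + 1 / 2 + (max n m : ℕ) < 0 := by
      rcases max_choice n m with h | h <;> rwa [h]
    have hi' : (i : ℝ) ≤ 2 * (max n m : ℕ) := mod_cast hi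
    linarith
  rw [integral_phiC_rhoD_mul_conj t φ hk₂ hn hm,
    sum_sum_jacobiCoeff_mul_jacobiMoment (add_natCast_ne_zero_of_re_pos hK) hN,
    Complex.betaIntegral_eq_Gamma_mul_div _ _ hK hB,
    show 2 * (k₂ : ℂ) + (2 * k₁ - 2 * k₂ - 1) = 2 * k₁ - 1 by ring,
    show 2 * (k₂ : ℂ) - 2 * k₁ + 1 + n = 2 * k₂ - 2 * k₁ + n + 1 by ring,
    show 1 - 2 * (k₂ : ℂ) + (2 * k₂ - 2 * k₁ + 1) = 2 - 2 * k₁ by ring,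
    show 2 * (k₂ : ℂ) - 2 * k₁ + 1 + 1 = 2 * k₂ - 2 * k₁ + 2 by ring]
  ring

/-- Orthogonality relations for the continuous Hahn functions at the discrete mass points:
`∫ φ_{ρ_n}(x) φ_{ρ_m}*(x) w(x) dx = δ_{nm} ⋅ (explicit constant)`. -/
theorem discrete_orthogonality (k₁ k₂ : ℝ) (hk₁ : 0 < k₁) (hk₂ : 0 < k₂)
    (hneg : k₂ - k₁ + 1/2 < 0) (t : ℝ)
    (φ : ℝ) (hφ₀ : 0 < φ) (hφπ : φ < Real.pi)
    (n m : ℕ) (hn : k₂ - k₁ + 1/2 + n < 0) (hm : k₂ - k₁ + 1/2 + m < 0) :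
    (∫ x : ℝ, phiC k₁ k₂ t φ (rhoD k₁ k₂ n) (x : ℂ) *
        conj (phiC k₁ k₂ t φ (rhoD k₁ k₂ m) (x : ℂ)) * wfun k₁ k₂ t φ (x : ℂ)) =
      (if n = m then 1 else 0) *
        (Complex.exp (((2 * t * (φ - Real.pi / 2) : ℝ) : ℂ)) *
          (Complex.Gamma (2 * (k₂ : ℂ)) * Complex.Gamma (2 * (k₁ : ℂ) - 2 * k₂ - 1) /
            (Complex.Gamma ((k₁ : ℂ) - k₂ + I * t) * Complex.Gamma ((k₁ : ℂ) - k₂ - I * t) *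
              Complex.Gamma (2 * (k₁ : ℂ) - 1))) *
          ((n.factorial : ℂ) * poch (2 * (k₂ : ℂ) - 2 * k₁ + n + 1) n *
              poch (2 - 2 * (k₁ : ℂ)) n) /
            (poch (2 * (k₂ : ℂ)) n * poch (2 * (k₂ : ℂ) - 2 * k₁ + 2) (2 * n))) :=
  discrete_orthogonality_general k₁ k₂ hk₂ t φ n m hn hm
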